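/- arXiv:1105.2787 — 2 statements merged into one kernel-verified Lean document; each statement's English description precedes it below -/
import Mathlib

section
/- For all integers m and n with m ≺ n, the set Z_{-n,-m} is the image of the set Z_{m,n} under negation: Z_{-n,-m} = { -x : x ∈ Z_{m,n} }. -/
/-!
The order `≺` lists the integers as `0, 1, 2, …, -2, -1`. On the nonzero integers negation
reverses it (`prec_neg_neg`), so for `m ≠ 0` it carries the segment `[m, n]` onto `[-n, -m]`.
For `m = 0` the minimum `0` is fixed instead, so `-n ⪯ 0` fails and `Z_{-n,0} = ℤ \ (0, -n)`;
this consists of `0` and of the elements `⪰ -n`, which are exactly the negatives of `[0, n]`.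
-/

open scoped Classical

/-- The new ordering relation on ℤ: `a ≺ b`. -/
def prec (a b : ℤ) : Prop :=
  (a = 0 ∧ b ≠ 0) ∨ (0 < a ∧ b < 0) ∨ (0 < a ∧ 0 < b ∧ a < b) ∨ (a < 0 ∧ b < 0 ∧ |b| < |a|)

/-- `a ⪯ b` means `a ≺ b` or `a = b`. -/
def preceq (a b : ℤ) : Prop := prec a b ∨ a = b

/-- The segment `[a, b]` with respect to `≺`. -/
def seg (a b : ℤ) : Set ℤ := {x : ℤ | preceq a x ∧ preceq x b}

/-- The open interval `(a, b)` with respect to `≺`. -/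
def openInt (a b : ℤ) : Set ℤ := {x : ℤ | prec a x ∧ prec x b}

/-- The set `Z_{a,b}`: the segment `[a,b]` if `a ⪯ b`, and `ℤ \ (b,a)` otherwise. -/
noncomputable def Zab (a b : ℤ) : Set ℤ :=
  if preceq a b then seg a b else Set.univ \ openInt b a

/-- Among negative integers `|b| < |a|` just says `a < b`, which makes `≺` linear arithmetic. -/
theorem prec_iff (a b : ℤ) : prec a b ↔
    (a = 0 ∧ b ≠ 0) ∨ (0 < a ∧ b < 0) ∨ (0 < a ∧ 0 < b ∧ a < b) ∨ (a < 0 ∧ b < 0 ∧ a < b) := by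
  unfold prec
  have key : a < 0 → b < 0 → (|b| < |a| ↔ a < b) := fun ha hb => by
    rw [abs_of_neg ha, abs_of_neg hb, neg_lt_neg_iff]
  tauto

theorem prec_neg_neg {a b : ℤ} (ha : a ≠ 0) (hb : b ≠ 0) : prec (-a) (-b) ↔ prec b a := by
  rw [prec_iff, prec_iff]
  omega

theorem preceq_neg_neg {a b : ℤ} (ha : a ≠ 0) (hb : b ≠ 0) :
    preceq (-a) (-b) ↔ preceq b a := by
  rw [preceq, preceq, prec_neg_neg ha hb, neg_inj, eq_comm]

theorem not_preceq_zero {a : ℤ} (ha : a ≠ 0) : ¬ preceq a 0 := by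
  rw [preceq, prec_iff]
  omega

/-- For `m ≺ n`, the set `Z_{-n,-m}` is the image of `Z_{m,n}` under negation. -/
theorem Zab_neg (m n : ℤ) (h : prec m n) :
    Zab (-n) (-m) = (fun x : ℤ => -x) '' Zab m n := by
  have hn : n ≠ 0 := by
    rw [prec_iff] at h
    omega
  have hmn : preceq m n := Or.inl h
  ext x
  rw [Set.image_neg_eq_neg, Set.mem_neg]
  by_cases hm : m = 0
  · subst hm
    have hnn : ¬ preceq (-n) (-0) := by
      rw [neg_zero]
      exact not_preceq_zero (neg_ne_zero.mpr hn)
    rw [Zab, Zab, if_pos hmn, if_neg hnn]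
    simp only [seg, openInt, preceq, prec_iff, Set.mem_sdiff, Set.mem_univ, true_and,
      Set.mem_ofPred_eq]
    omega
  · rw [Zab, Zab, if_pos hmn, if_pos ((preceq_neg_neg hn hm).mpr hmn)]
    simp only [seg, Set.mem_ofPred_eq]
    by_cases hx : x = 0
    · -- `0` lies in neither segment, both having a nonzero left endpoint.
      subst hx
      rw [neg_zero]
      exact iff_of_false (fun h0 => not_preceq_zero (neg_ne_zero.mpr hn) h0.1)
        (fun h0 => not_preceq_zero hm h0.1)
    · have hx' : -x ≠ 0 := neg_ne_zero.mpr hx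
      rw [← preceq_neg_neg hx' hm, ← preceq_neg_neg hn hx', neg_neg, and_comm]
end

section
/- Let a, c be integers and let b be an integer with b ∈ Z_{a,c} and b ≠ c. Then Z_{a,c} = Z_{a,b} ∪ Z_{b+1,c} and Z_{a,b} ∩ Z_{b+1,c} = ∅. -/
/-!
The relation `≺` is the strict linear order `0 ≺ 1 ≺ 2 ≺ ⋯ ≺ -3 ≺ -2 ≺ -1`: non-negative integers
come before negative ones, and inside each of the two classes `≺` is the usual `<` (`prec_iff`).
Closing this order up to a cycle, with `-1` followed by `0`, makes `b + 1` the successor of every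
`b`, and `Z_{a,b}` is the arc running from `a` up to `b`. Thus the theorem says that cutting an arc
just after one of its points, other than the last one, gives two disjoint arcs; the last point has
to be excluded because `b = c` would make `Z_{b+1,c}` the whole of `ℤ`. With `≺` expressed through
signs and `<`, membership in all the arcs is linear arithmetic, and so is the claim for each point.
-/

open scoped Classical

/-- The two classes of integers of equal sign are each ordered as usual, because `|y| < |x|` means
`x < y` for negative `x`, `y`. -/
theorem prec_iff_s6 (x y : ℤ) :
    prec x y ↔ (0 ≤ x ∧ y < 0) ∨ ((0 ≤ x ↔ 0 ≤ y) ∧ x < y) := by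
  unfold prec
  rcases abs_cases x with hx | hx <;> rcases abs_cases y with hy | hy <;> omega

theorem mem_Zab_iff (a b x : ℤ) :
    x ∈ Zab a b ↔ (¬ prec b a ∧ ¬ prec x a ∧ ¬ prec b x) ∨
      (prec b a ∧ (¬ prec b x ∨ ¬ prec x a)) := by
  -- Totality of `≺` turns each `⪯` into the negation of the reversed `≺`.
  have hle (u v : ℤ) : preceq u v ↔ ¬ prec v u := by
    simp only [preceq, prec_iff_s6]
    omega
  unfold Zab
  split_ifs with h <;> rw [hle] at h <;> simp [seg, openInt, hle] <;> tauto

/-- Splitting of `Z_{a,c}` at an interior point `b`. -/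
theorem Zab_split (a c b : ℤ) (hb : b ∈ Zab a c) (hbc : b ≠ c) :
    Zab a c = Zab a b ∪ Zab (b + 1) c ∧ Zab a b ∩ Zab (b + 1) c = ∅ := by
  rw [mem_Zab_iff] at hb
  constructor <;> ext x
  · simp only [Set.mem_union, mem_Zab_iff, prec_iff_s6] at hb ⊢
    rcases lt_or_ge a 0 with ha | ha <;> rcases lt_or_ge b 0 with hb0 | hb0 <;>
      rcases lt_or_ge c 0 with hc | hc <;> rcases lt_or_ge x 0 with hx | hx <;> omega
  · simp only [Set.mem_inter_iff, Set.mem_empty_iff_false, iff_false, mem_Zab_iff, prec_iff_s6] at hb ⊢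
    rcases lt_or_ge a 0 with ha | ha <;> rcases lt_or_ge b 0 with hb0 | hb0 <;>
      rcases lt_or_ge c 0 with hc | hc <;> rcases lt_or_ge x 0 with hx | hx <;> omega
end
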